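/- arXiv:1907.06878 — 3 statements merged into one kernel-verified Lean document; each statement's English description precedes it below -/
import Mathlib

section
/- There exists a constant C with the following property: for every family of weights m : ℤ × {1,2,3,…} → [0,∞) with M := sup m < ∞, and every function f : ℂ → ℂ holomorphic on the upper half-plane Π, one has ∑_{n₁∈ℤ} ∑_{n₂=1}^{∞} m(n₁,n₂) · |f(n₁ + i n₂)|² ≤ C · M · ∫_Π |f(z)|² dA(z). -/
/-!
Point evaluation is controlled by area integrals: if `f` is holomorphic on the disc of radius `1/2`
about `c`, the mean value property of `f ^ 2` on each circle of radius `r < 1/2` gives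
`2 π ‖f c‖² ≤ ∫ ‖f (c + r e^{iθ})‖² dθ`, and integrating against `r dr` over `(0, 1/2)` gives
`(π / 4) ‖f c‖² ≤ ∫ ‖f‖² dA` over the disc (`sq_le_lintegral_ball`).
The discs of radius `1/2` about the points of `ℤ + iℕ` are pairwise disjoint (distinct points are
at distance at least `1`) and lie in the half-plane, so these inequalities can be summed, and the
bound holds with `C = 4 / π`.
-/

open Complex MeasureTheory Metric Set ENNReal

noncomputable section

/-- The upper half-plane `Π = {z : ℂ | Im z > 0}`. -/
def UHP : Set ℂ := {z : ℂ | 0 < z.im}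

/-- The mean value inequality on a circle. The angle runs over `(-π, π)`, as in polar
coordinates. -/
lemma sq_le_lintegral_circle {f : ℂ → ℂ} {c : ℂ} {R r : ℝ}
    (hf : DifferentiableOn ℂ f (ball c R)) (hr : 0 < r) (hrR : r < R) :
    ENNReal.ofReal (2 * Real.pi) * ‖f c‖ₑ ^ 2
      ≤ ∫⁻ θ in Ioo (-Real.pi) Real.pi, ‖f (circleMap c r θ)‖ₑ ^ 2 := by
  have hd : DiffContOnCl ℂ (fun z => f z ^ 2) (ball c |r|) := by
    rw [abs_of_pos hr]
    refine DifferentiableOn.diffContOnCl ?_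
    rw [closure_ball _ hr.ne']
    exact (hf.mono (closedBall_subset_ball hrR)).pow 2
  have h := hd.circleAverage
  rw [Real.circleAverage_def] at h
  have hper : Function.Periodic (fun θ => f (circleMap c r θ) ^ 2) (2 * Real.pi) := fun θ => by
    simp only [periodic_circleMap c r θ]
  have h2 := hper.intervalIntegral_add_eq 0 (-Real.pi)
  rw [zero_add, show -Real.pi + 2 * Real.pi = Real.pi by ring] at h2
  rw [h2, intervalIntegral.integral_of_le (by linarith [Real.pi_pos]),
    integral_Ioc_eq_integral_Ioo] at h
  have h3 : (2 * Real.pi) • f c ^ 2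
      = ∫ θ in Ioo (-Real.pi) Real.pi, f (circleMap c r θ) ^ 2 := by
    rw [← h, smul_inv_smul₀ (by positivity)]
  have h4 := enorm_integral_le_lintegral_enorm (μ := volume.restrict (Ioo (-Real.pi) Real.pi))
    (fun θ => f (circleMap c r θ) ^ 2)
  rw [← h3, enorm_smul, Real.enorm_of_nonneg (by positivity)] at h4
  simpa only [enorm_pow] using h4

lemma lintegral_radius :
    ∫⁻ r in Ioo (0 : ℝ) (1 / 2), ENNReal.ofReal r = ENNReal.ofReal (1 / 8) := by
  rw [← ofReal_integral_eq_lintegral_ofReal, ← integral_Ioc_eq_integral_Ioo,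
    ← intervalIntegral.integral_of_le (by norm_num), integral_id]
  · norm_num
  · exact (continuous_id.integrableOn_Icc (a := 0) (b := 1 / 2)).mono_set Ioo_subset_Icc_self
  · filter_upwards [ae_restrict_mem measurableSet_Ioo] with r hr using hr.1.le

/-- The sub-mean value inequality on a disc, obtained by integrating the circle version against
`r dr`. -/
lemma sq_le_lintegral_ball {f : ℂ → ℂ} {c : ℂ} (hf : DifferentiableOn ℂ f (ball c (1 / 2))) :
    ENNReal.ofReal (Real.pi / 4) * ‖f c‖ₑ ^ 2 ≤ ∫⁻ z in ball c (1 / 2), ‖f z‖ₑ ^ 2 := by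
  classical
  -- `g` extends `‖f‖²` by zero outside the disc, which makes it globally measurable.
  set g : ℂ → ℝ≥0∞ := (ball c (1 / 2)).indicator (fun z => ‖f z‖ₑ ^ 2) with hg
  have hgm : Measurable g := by
    have hc : ContinuousOn (fun z => ‖f z‖ₑ ^ 2) (ball c (1 / 2)) :=
      (ENNReal.continuous_pow 2).comp_continuousOn hf.continuousOn.enorm
    rw [hg, ← Set.piecewise_eq_indicator]
    exact hc.measurable_piecewise continuousOn_const measurableSet_ball
  have hsym : ∀ p : ℝ × ℝ, c + Complex.polarCoord.symm p = circleMap c p.1 p.2 := fun p => by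
    rw [Complex.polarCoord_symm_apply, circleMap, Complex.exp_mul_I, ofReal_cos, ofReal_sin]
  have hcirc : Measurable fun p : ℝ × ℝ => circleMap c p.1 p.2 := by
    unfold circleMap
    exact Continuous.measurable (by fun_prop)
  have hFm : Measurable fun p : ℝ × ℝ => ENNReal.ofReal p.1 * g (circleMap c p.1 p.2) :=
    measurable_fst.ennreal_ofReal.mul (hgm.comp hcirc)
  calc ENNReal.ofReal (Real.pi / 4) * ‖f c‖ₑ ^ 2
      = (∫⁻ r in Ioo (0 : ℝ) (1 / 2), ENNReal.ofReal r)
          * (ENNReal.ofReal (2 * Real.pi) * ‖f c‖ₑ ^ 2) := by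
        rw [lintegral_radius, ← mul_assoc, ← ENNReal.ofReal_mul (by norm_num)]
        congr 2
        ring
    _ = ∫⁻ r in Ioo (0 : ℝ) (1 / 2),
          ENNReal.ofReal r * (ENNReal.ofReal (2 * Real.pi) * ‖f c‖ₑ ^ 2) :=
        (lintegral_mul_const _ ENNReal.measurable_ofReal).symm
    _ ≤ ∫⁻ r in Ioo (0 : ℝ) (1 / 2), ∫⁻ θ in Ioo (-Real.pi) Real.pi,
          ENNReal.ofReal r * g (circleMap c r θ) := by
        refine setLIntegral_mono' measurableSet_Ioo fun r hr => ?_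
        rw [lintegral_const_mul' _ _ ENNReal.ofReal_ne_top]
        gcongr
        refine (sq_le_lintegral_circle hf hr.1 hr.2).trans_eq ?_
        refine lintegral_congr fun θ => ?_
        rw [hg, indicator_of_mem]
        exact sphere_subset_closedBall.trans (closedBall_subset_ball hr.2)
          (circleMap_mem_sphere c hr.1.le θ)
    _ ≤ ∫⁻ r in Ioi (0 : ℝ), ∫⁻ θ in Ioo (-Real.pi) Real.pi,
          ENNReal.ofReal r * g (circleMap c r θ) :=
        lintegral_mono_set Ioo_subset_Ioi_self
    _ = ∫⁻ p in polarCoord.target, ENNReal.ofReal p.1 * g (circleMap c p.1 p.2) := by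
        rw [polarCoord_target, Measure.volume_eq_prod, ← Measure.prod_restrict,
          lintegral_prod _ hFm.aemeasurable]
    _ = ∫⁻ z, g (c + z) := by
        rw [← Complex.lintegral_comp_polarCoord_symm]
        simp only [hsym, smul_eq_mul]
    _ = ∫⁻ z, g z := lintegral_add_left_eq_self g c
    _ = ∫⁻ z in ball c (1 / 2), ‖f z‖ₑ ^ 2 := lintegral_indicator measurableSet_ball _

/-- The point `n₁ + i n₂` of the lattice `ℤ + iℕ`. -/
def latticePoint (p : ℤ × ℕ+) : ℂ := (p.1 : ℂ) + ((p.2 : ℕ) : ℂ) * Complex.I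

lemma latticePoint_re (p : ℤ × ℕ+) : (latticePoint p).re = p.1 := by simp [latticePoint]

lemma latticePoint_im (p : ℤ × ℕ+) : (latticePoint p).im = (p.2 : ℕ) := by simp [latticePoint]

lemma one_le_dist_latticePoint {p q : ℤ × ℕ+} (h : p ≠ q) :
    1 ≤ dist (latticePoint p) (latticePoint q) := by
  rw [dist_eq_norm]
  by_cases h1 : p.1 = q.1
  · have h2 : ((p.2 : ℕ) : ℤ) - ((q.2 : ℕ) : ℤ) ≠ 0 := fun h2 =>
      h (Prod.ext h1 (PNat.eq (by omega)))
    have h3 : (1 : ℝ) ≤ |(((p.2 : ℕ) : ℤ) - ((q.2 : ℕ) : ℤ) : ℤ)| := by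
      exact_mod_cast Int.one_le_abs h2
    refine le_trans ?_ (Complex.abs_im_le_norm _)
    rw [Complex.sub_im, latticePoint_im, latticePoint_im]
    simpa using h3
  · have h3 : (1 : ℝ) ≤ |((p.1 - q.1 : ℤ) : ℝ)| := by
      exact_mod_cast Int.one_le_abs (sub_ne_zero.2 h1)
    refine le_trans ?_ (Complex.abs_re_le_norm _)
    rw [Complex.sub_re, latticePoint_re, latticePoint_re]
    simpa using h3

lemma ball_latticePoint_subset (p : ℤ × ℕ+) : ball (latticePoint p) (1 / 2) ⊆ UHP := by
  intro z hz
  rw [mem_ball, dist_eq_norm] at hz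
  have h1 := (Complex.abs_im_le_norm (z - latticePoint p)).trans_lt hz
  rw [Complex.sub_im, latticePoint_im, abs_lt] at h1
  have h2 : (1 : ℝ) ≤ (p.2 : ℕ) := by exact_mod_cast p.2.pos
  change 0 < z.im
  linarith [h1.1]

/-- Boundedness of the Toeplitz operator with symbol the measure `∑_ν m_ν δ(z - ν)` supported on
the lattice `ℤ + iℕ`, for any bounded family of nonnegative weights `m`. -/
theorem lattice_measure_bounded :
    ∃ C : ℝ, 0 < C ∧
      ∀ (m : ℤ × ℕ+ → ℝ) (M : ℝ),
        (∀ p, 0 ≤ m p) → (∀ p, m p ≤ M) →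
        ∀ f : ℂ → ℂ, DifferentiableOn ℂ f UHP →
          ∑' (n₁ : ℤ) (n₂ : ℕ+),
              ENNReal.ofReal (m (n₁, n₂))
                * (‖f ((n₁ : ℂ) + ((n₂ : ℕ) : ℂ) * Complex.I)‖₊ : ℝ≥0∞) ^ 2
            ≤ ENNReal.ofReal (C * M) * ∫⁻ z in UHP, (‖f z‖₊ : ℝ≥0∞) ^ 2 := by
  refine ⟨4 / Real.pi, by positivity, fun m M _ hM f hf => ?_⟩
  have hpt : ∀ p : ℤ × ℕ+, ENNReal.ofReal (m p) * ‖f (latticePoint p)‖ₑ ^ 2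
      ≤ ENNReal.ofReal (4 / Real.pi * M)
        * ∫⁻ z in ball (latticePoint p) (1 / 2), ‖f z‖ₑ ^ 2 := fun p => by
    have h1 := sq_le_lintegral_ball (hf.mono (ball_latticePoint_subset p))
    calc ENNReal.ofReal (m p) * ‖f (latticePoint p)‖ₑ ^ 2
        ≤ ENNReal.ofReal M * ‖f (latticePoint p)‖ₑ ^ 2 := by
          gcongr
          exact hM p
      _ = ENNReal.ofReal (4 / Real.pi * M)
            * (ENNReal.ofReal (Real.pi / 4) * ‖f (latticePoint p)‖ₑ ^ 2) := by
          rw [← mul_assoc, ← ENNReal.ofReal_mul' (by positivity)]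
          congr 2
          field_simp
      _ ≤ _ := by gcongr
  have hdisj : Pairwise (Function.onFun Disjoint fun p => ball (latticePoint p) (1 / 2)) :=
    fun p q hpq => ball_disjoint_ball (by linarith [one_le_dist_latticePoint hpq])
  calc ∑' (n₁ : ℤ) (n₂ : ℕ+), ENNReal.ofReal (m (n₁, n₂))
          * (‖f ((n₁ : ℂ) + ((n₂ : ℕ) : ℂ) * Complex.I)‖₊ : ℝ≥0∞) ^ 2
      = ∑' p : ℤ × ℕ+, ENNReal.ofReal (m p) * ‖f (latticePoint p)‖ₑ ^ 2 :=
        (ENNReal.tsum_prod (f := fun n₁ n₂ =>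
          ENNReal.ofReal (m (n₁, n₂)) * ‖f (latticePoint (n₁, n₂))‖ₑ ^ 2)).symm
    _ ≤ ∑' p : ℤ × ℕ+, ENNReal.ofReal (4 / Real.pi * M)
          * ∫⁻ z in ball (latticePoint p) (1 / 2), ‖f z‖ₑ ^ 2 := ENNReal.tsum_le_tsum hpt
    _ = ENNReal.ofReal (4 / Real.pi * M)
          * ∫⁻ z in ⋃ p, ball (latticePoint p) (1 / 2), ‖f z‖ₑ ^ 2 := by
        rw [ENNReal.tsum_mul_left, lintegral_iUnion (fun _ => measurableSet_ball) hdisj]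
    _ ≤ ENNReal.ofReal (4 / Real.pi * M) * ∫⁻ z in UHP, ‖f z‖ₑ ^ 2 := by
        gcongr
        exact iUnion_subset ball_latticePoint_subset
end
end

section
/- Fix α, β ∈ ℕ. There exists a constant C such that for all functions f, g : ℂ → ℂ holomorphic on the upper half-plane Π with ∫_Π |f|² dA < ∞ and ∫_Π |g|² dA < ∞, one has ∑_{n₁∈ℤ} ∑_{n₂=1}^{∞} n₂^{−(α+β)} · |f^{(α)}(n₁ + i n₂)| · |g^{(β)}(n₁ + i n₂)| ≤ C · (∫_Π |f|² dA)^{1/2} · (∫_Π |g|² dA)^{1/2}. -/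
/-!
The weights `n₂^{-(α+β)}` are at most `1`, so the form is dominated by the unweighted one, and by
Cauchy-Schwarz it suffices that `f ↦ (f^{(α)}(ν))_ν` is bounded from the Bergman space of the
half-plane to `ℓ²` (`tsum_deriv_sq_le`). For this, the discs of radius `1/2` about the lattice
points are disjoint and lie in the half-plane because `n₂ ≥ 1`, and on each of them
`|f^{(α)}(ν)|² ≤ K ∫ |f|²` with `K` depending on `α` only (`deriv_sq_le`): Cauchy's inequality
bounds `f^{(α)}(ν)` by the maximum of `|f|` on the circle of radius `1/4`, and the area mean value
inequality for the holomorphic function `f²` (`disc_sub_mean`) bounds that maximum.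
-/


open Complex MeasureTheory Metric Set ENNReal

noncomputable section

/-- The mean value property gives `2π |F(w)| ≤ ∫ |F(w + r e^{iθ})| dθ`. The angle runs over
`(-π, π)`, as in `Complex.polarCoord`. -/
lemma circle_sub_mean {F : ℂ → ℂ} {w : ℂ} {r : ℝ} (hr : 0 < r)
    (hF : DiffContOnCl ℂ F (ball w r)) :
    ENNReal.ofReal (2 * Real.pi) * ‖F w‖ₑ
      ≤ ∫⁻ θ in Ioo (-Real.pi) Real.pi, ‖F (circleMap w r θ)‖ₑ := by
  have h1 : Real.circleAverage F w r = F w := by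
    apply DiffContOnCl.circleAverage
    rwa [abs_of_pos hr]
  have h2 : (2 * Real.pi) • F w = ∫ θ in Ioo (-Real.pi) Real.pi, F (circleMap w r θ) := by
    have hper : Function.Periodic (fun θ => F (circleMap w r θ)) (2 * Real.pi) := fun θ => by
      simp [periodic_circleMap w r θ]
    have h3 := hper.intervalIntegral_add_eq 0 (-Real.pi)
    rw [zero_add, show -Real.pi + 2 * Real.pi = Real.pi by ring] at h3
    rw [← h1, Real.circleAverage_def, smul_smul, mul_inv_cancel₀ (by positivity), one_smul, h3,
      intervalIntegral.integral_of_le (by linarith [Real.pi_pos]), integral_Ioc_eq_integral_Ioo]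
  calc ENNReal.ofReal (2 * Real.pi) * ‖F w‖ₑ = ‖(2 * Real.pi) • F w‖ₑ := by
        rw [enorm_smul, Real.enorm_of_nonneg (by positivity)]
    _ ≤ _ := by
        rw [h2]
        exact enorm_integral_le_lintegral_enorm _

/-- Area form of the sub-mean value property, obtained from the circles by polar coordinates. -/
lemma disc_sub_mean {F : ℂ → ℂ} {w : ℂ} {R : ℝ} (hR : 0 < R)
    (hF : DifferentiableOn ℂ F (ball w R)) :
    ENNReal.ofReal (Real.pi * R ^ 2) * ‖F w‖ₑ ≤ ∫⁻ z in ball w R, ‖F z‖ₑ := by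
  have hrad : ∫⁻ r in Ioo 0 R, ENNReal.ofReal r = ENNReal.ofReal (R ^ 2 / 2) := by
    rw [← ofReal_integral_eq_lintegral_ofReal, ← integral_Ioc_eq_integral_Ioo,
      ← intervalIntegral.integral_of_le hR.le, integral_id]
    · simp
    · exact (continuous_id.integrableOn_Icc (a := 0) (b := R)).mono_set Ioo_subset_Icc_self
    · filter_upwards [ae_restrict_mem measurableSet_Ioo] with r hr using hr.1.le
  have hmem : ∀ p ∈ Ioo 0 R ×ˢ Ioo (-Real.pi) Real.pi, circleMap w p.1 p.2 ∈ ball w R := by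
    rintro ⟨r, θ⟩ ⟨hr, -⟩
    simp only at hr ⊢
    rw [mem_ball, dist_eq_norm, circleMap_sub_center, norm_circleMap_zero, abs_of_pos hr.1]
    exact hr.2
  have hcont : ContinuousOn (fun p : ℝ × ℝ => ENNReal.ofReal p.1 * ‖F (circleMap w p.1 p.2)‖ₑ)
      (Ioo 0 R ×ˢ Ioo (-Real.pi) Real.pi) := by
    have hc : Continuous (fun p : ℝ × ℝ => circleMap w p.1 p.2) := by
      unfold circleMap
      fun_prop
    have h1 : ContinuousOn (fun p : ℝ × ℝ => F (circleMap w p.1 p.2))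
        (Ioo 0 R ×ˢ Ioo (-Real.pi) Real.pi) :=
      hF.continuousOn.comp hc.continuousOn hmem
    intro p hp
    exact ENNReal.Tendsto.mul (ENNReal.continuous_ofReal.comp continuous_fst).continuousWithinAt
      (Or.inr enorm_ne_top) (h1 p hp).enorm (Or.inr ENNReal.ofReal_ne_top)
  calc ENNReal.ofReal (Real.pi * R ^ 2) * ‖F w‖ₑ
      = ∫⁻ r in Ioo 0 R, ENNReal.ofReal r * (ENNReal.ofReal (2 * Real.pi) * ‖F w‖ₑ) := by
        rw [lintegral_mul_const _ (by fun_prop), hrad, ← mul_assoc,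
          ← ENNReal.ofReal_mul (by positivity)]
        congr 2
        ring
    _ ≤ ∫⁻ r in Ioo 0 R, ∫⁻ θ in Ioo (-Real.pi) Real.pi,
          ENNReal.ofReal r * ‖F (circleMap w r θ)‖ₑ := by
        refine setLIntegral_mono' measurableSet_Ioo fun r hr => ?_
        rw [lintegral_const_mul' _ _ ENNReal.ofReal_ne_top]
        gcongr
        refine circle_sub_mean hr.1 ((hF.mono ?_).diffContOnCl)
        rw [closure_ball _ hr.1.ne']
        exact closedBall_subset_ball hr.2
    _ = ∫⁻ p in Ioo 0 R ×ˢ Ioo (-Real.pi) Real.pi,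
          ENNReal.ofReal p.1 * ‖F (circleMap w p.1 p.2)‖ₑ := by
        rw [Measure.volume_eq_prod, ← Measure.prod_restrict, lintegral_prod]
        rw [Measure.prod_restrict, ← Measure.volume_eq_prod]
        exact hcont.aemeasurable (measurableSet_Ioo.prod measurableSet_Ioo)
    _ = ∫⁻ p in Ioo 0 R ×ˢ Ioo (-Real.pi) Real.pi, ENNReal.ofReal p.1 •
          (ball w R).indicator (fun z => ‖F z‖ₑ) (w + Complex.polarCoord.symm p) := by
        refine setLIntegral_congr_fun (measurableSet_Ioo.prod measurableSet_Ioo) fun p hp => ?_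
        have hpol : w + Complex.polarCoord.symm p = circleMap w p.1 p.2 := by
          rw [Complex.polarCoord_symm_apply, circleMap, Complex.exp_mul_I]
          simp
        rw [hpol, indicator_of_mem (hmem p hp), smul_eq_mul]
    _ ≤ ∫⁻ p in _root_.polarCoord.target, ENNReal.ofReal p.1 •
          (ball w R).indicator (fun z => ‖F z‖ₑ) (w + Complex.polarCoord.symm p) := by
        refine lintegral_mono_set ?_
        rw [_root_.polarCoord_target]
        exact prod_mono Ioo_subset_Ioi_self subset_rfl
    _ = ∫⁻ z in ball w R, ‖F z‖ₑ := by
        rw [Complex.lintegral_comp_polarCoord_symm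
            (fun z => (ball w R).indicator (fun z => ‖F z‖ₑ) (w + z)),
          lintegral_add_left_eq_self, lintegral_indicator measurableSet_ball]

/-- The constant `(n! 4ⁿ)² · 16/π` in the local estimate `deriv_sq_le`. -/
def derivConst (n : ℕ) : ℝ := (n.factorial * 4 ^ n) ^ 2 * (16 / Real.pi)

lemma derivConst_nonneg (n : ℕ) : 0 ≤ derivConst n := by
  have := Real.pi_pos
  unfold derivConst
  positivity

/-- Local Bergman estimate: Cauchy's inequality on the circle of radius `1/4` about `z`, with the
values on that circle bounded by averaging `f²` over discs of radius `1/4`. -/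
lemma deriv_sq_le {f : ℂ → ℂ} {z : ℂ} (n : ℕ) (hf : DifferentiableOn ℂ f (ball z (1 / 2))) :
    ‖iteratedDeriv n f z‖ₑ ^ 2
      ≤ ENNReal.ofReal (derivConst n) * ∫⁻ u in ball z (1 / 2), ‖f u‖ₑ ^ 2 := by
  have hpi := Real.pi_pos
  set J : ℝ≥0∞ := ∫⁻ u in ball z (1 / 2), ‖f u‖ₑ ^ 2 with hJ
  have hpos : 0 < derivConst n := by unfold derivConst; positivity
  by_cases hJtop : J = ∞
  · rw [hJtop, ENNReal.mul_top (by simpa using hpos)]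
    exact le_top
  have hsph : ∀ w ∈ sphere z (1 / 4), ‖f w‖ ≤ Real.sqrt (16 / Real.pi * J.toReal) := by
    intro w hw
    have hsub : ball w (1 / 4) ⊆ ball z (1 / 2) := by
      apply ball_subset_ball'
      rw [mem_sphere.1 hw]
      norm_num
    have h1 := disc_sub_mean (F := fun u => f u ^ 2) (w := w) (R := 1 / 4) (by norm_num)
      ((hf.mono hsub).pow 2)
    simp only [enorm_pow] at h1
    have h2 := ENNReal.toReal_mono hJtop (h1.trans (lintegral_mono_set hsub))
    rw [ENNReal.toReal_mul, ENNReal.toReal_ofReal (by positivity), ENNReal.toReal_pow,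
      toReal_enorm] at h2
    apply Real.le_sqrt_of_sq_le
    rw [div_mul_eq_mul_div, le_div_iff₀ hpi]
    linarith
  have hcl : DiffContOnCl ℂ f (ball z (1 / 4)) := by
    refine (hf.mono ?_).diffContOnCl
    rw [closure_ball _ (by norm_num)]
    exact closedBall_subset_ball (by norm_num)
  have h3 := norm_iteratedDeriv_le_of_forall_mem_sphere_norm_le n (by norm_num) hcl hsph
  have h4 : ‖iteratedDeriv n f z‖ ^ 2 ≤ derivConst n * J.toReal := by
    refine (pow_le_pow_left₀ (norm_nonneg _) h3 2).trans_eq ?_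
    rw [div_pow, mul_pow, Real.sq_sqrt (by positivity), derivConst, one_div, inv_pow, inv_pow,
      div_inv_eq_mul]
    ring
  rw [← ofReal_norm, ← ENNReal.ofReal_pow (norm_nonneg _)]
  refine (ENNReal.ofReal_le_ofReal h4).trans_eq ?_
  rw [ENNReal.ofReal_mul hpos.le, ENNReal.ofReal_toReal hJtop]

/-- The point `n₁ + i n₂` of the lattice `ℤ + iℕ`. -/
def latticePt (p : ℤ × ℕ+) : ℂ := (p.1 : ℂ) + ((p.2 : ℕ) : ℂ) * Complex.I

lemma latticePt_re (p : ℤ × ℕ+) : (latticePt p).re = p.1 := by simp [latticePt]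

lemma latticePt_im (p : ℤ × ℕ+) : (latticePt p).im = (p.2 : ℕ) := by simp [latticePt]

lemma ball_latticePt_subset (p : ℤ × ℕ+) : ball (latticePt p) (1 / 2) ⊆ UHP := by
  intro z hz
  have h1 : |(z - latticePt p).im| < 1 / 2 := (abs_im_le_norm _).trans_lt (mem_ball_iff_norm.1 hz)
  rw [sub_im, latticePt_im, abs_lt] at h1
  have h2 : (1 : ℝ) ≤ (p.2 : ℕ) := by exact_mod_cast p.2.pos
  change 0 < z.im
  linarith [h1.1]

lemma latticePt_dist {p q : ℤ × ℕ+} (hpq : p ≠ q) : 1 ≤ dist (latticePt p) (latticePt q) := by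
  rw [dist_eq_norm]
  by_cases h : p.1 = q.1
  · have h2 : ((p.2 : ℕ) : ℤ) - (q.2 : ℕ) ≠ 0 := by
      intro h3
      exact hpq (Prod.ext h (PNat.coe_injective (by omega)))
    refine le_trans ?_ (abs_im_le_norm _)
    rw [sub_im, latticePt_im, latticePt_im]
    exact_mod_cast Int.one_le_abs h2
  · refine le_trans ?_ (abs_re_le_norm _)
    rw [sub_re, latticePt_re, latticePt_re]
    exact_mod_cast Int.one_le_abs (sub_ne_zero.2 h)

/-- Sampling the `n`-th derivative on the lattice is bounded from the Bergman space to `ℓ²`, since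
the discs of radius `1/2` about the lattice points are disjoint and contained in `UHP`. -/
lemma tsum_deriv_sq_le {f : ℂ → ℂ} (n : ℕ) (hf : DifferentiableOn ℂ f UHP)
    (hi : IntegrableOn (fun z => ‖f z‖ ^ 2) UHP volume) :
    ∑' p, ‖iteratedDeriv n f (latticePt p)‖ₑ ^ 2
      ≤ ENNReal.ofReal (derivConst n * ∫ z in UHP, ‖f z‖ ^ 2) := by
  calc ∑' p, ‖iteratedDeriv n f (latticePt p)‖ₑ ^ 2
      ≤ ∑' p, ENNReal.ofReal (derivConst n) * ∫⁻ u in ball (latticePt p) (1 / 2), ‖f u‖ₑ ^ 2 :=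
        ENNReal.tsum_le_tsum fun p => deriv_sq_le n (hf.mono (ball_latticePt_subset p))
    _ = ENNReal.ofReal (derivConst n) *
          ∫⁻ u in ⋃ p, ball (latticePt p) (1 / 2), ‖f u‖ₑ ^ 2 := by
        rw [ENNReal.tsum_mul_left, lintegral_iUnion (fun _ => measurableSet_ball)]
        intro p q hpq
        apply ball_disjoint_ball
        linarith [latticePt_dist hpq]
    _ ≤ ENNReal.ofReal (derivConst n) * ∫⁻ u in UHP, ‖f u‖ₑ ^ 2 := by
        gcongr
        exact iUnion_subset ball_latticePt_subset
    _ = _ := by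
        rw [ENNReal.ofReal_mul (derivConst_nonneg n),
          ofReal_integral_eq_lintegral_ofReal hi (ae_of_all _ fun _ => by positivity)]
        congr 2
        ext u
        rw [ENNReal.ofReal_pow (norm_nonneg _), ofReal_norm]

lemma tsum_cauchySchwarz {ι : Type*} (a b : ι → ℝ≥0∞) :
    ∑' p, a p * b p ≤ (∑' p, a p ^ 2) ^ (1 / 2 : ℝ) * (∑' p, b p ^ 2) ^ (1 / 2 : ℝ) := by
  let _ : MeasurableSpace ι := ⊤
  have h := ENNReal.lintegral_mul_le_Lp_mul_Lq (Measure.count : Measure ι)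
    Real.HolderConjugate.two_two (f := a) (g := b) measurable_from_top.aemeasurable
    measurable_from_top.aemeasurable
  simpa [lintegral_count' measurable_from_top] using h

/-- Boundedness of the Toeplitz operator with distributional symbol
`W(ν) ∂^α conj(∂)^β ∑_ν δ(z-ν)`, `W(n₁+in₂) = n₂^{-α-β}`, on the lattice `ℤ + iℕ`. -/
theorem lattice_derivative_form_bounded (α β : ℕ) :
    ∃ C : ℝ, ∀ f g : ℂ → ℂ,
      DifferentiableOn ℂ f UHP → DifferentiableOn ℂ g UHP →
      IntegrableOn (fun z => ‖f z‖ ^ 2) UHP volume →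
      IntegrableOn (fun z => ‖g z‖ ^ 2) UHP volume →
      ∑' (n₁ : ℤ) (n₂ : ℕ+),
          ENNReal.ofReal ((((n₂ : ℕ) : ℝ)) ^ (-((α : ℤ) + β)))
            * ((‖iteratedDeriv α f ((n₁ : ℂ) + ((n₂ : ℕ) : ℂ) * Complex.I)‖₊ : ℝ≥0∞)
                * (‖iteratedDeriv β g ((n₁ : ℂ) + ((n₂ : ℕ) : ℂ) * Complex.I)‖₊ : ℝ≥0∞))
        ≤ ENNReal.ofReal
            (C * Real.sqrt (∫ z in UHP, ‖f z‖ ^ 2) * Real.sqrt (∫ z in UHP, ‖g z‖ ^ 2)) := by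
  refine ⟨Real.sqrt (derivConst α) * Real.sqrt (derivConst β), fun f g hf hg hfi hgi => ?_⟩
  have hw : ∀ n₂ : ℕ+, ENNReal.ofReal ((((n₂ : ℕ) : ℝ)) ^ (-((α : ℤ) + β))) ≤ 1 := fun n₂ => by
    rw [ENNReal.ofReal_le_one]
    exact zpow_le_one_of_nonpos₀ (by exact_mod_cast n₂.pos) (by omega)
  have hroot : ∀ (n : ℕ) (h : ℂ → ℂ),
      ENNReal.ofReal (derivConst n * ∫ z in UHP, ‖h z‖ ^ 2) ^ (1 / 2 : ℝ)
        = ENNReal.ofReal (Real.sqrt (derivConst n) * Real.sqrt (∫ z in UHP, ‖h z‖ ^ 2)) := by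
    intro n h
    have hI : 0 ≤ ∫ z in UHP, ‖h z‖ ^ 2 := integral_nonneg fun _ => by positivity
    rw [ENNReal.ofReal_rpow_of_nonneg (mul_nonneg (derivConst_nonneg n) hI) (by norm_num),
      ← Real.sqrt_eq_rpow, Real.sqrt_mul (derivConst_nonneg n)]
  calc _ ≤ ∑' (n₁ : ℤ) (n₂ : ℕ+), ‖iteratedDeriv α f (latticePt (n₁, n₂))‖ₑ *
          ‖iteratedDeriv β g (latticePt (n₁, n₂))‖ₑ :=
        ENNReal.tsum_le_tsum fun n₁ => ENNReal.tsum_le_tsum fun n₂ =>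
          mul_le_of_le_one_left' (hw n₂)
    _ = ∑' p, ‖iteratedDeriv α f (latticePt p)‖ₑ * ‖iteratedDeriv β g (latticePt p)‖ₑ :=
        (ENNReal.tsum_prod (f := fun n₁ n₂ => ‖iteratedDeriv α f (latticePt (n₁, n₂))‖ₑ *
          ‖iteratedDeriv β g (latticePt (n₁, n₂))‖ₑ)).symm
    _ ≤ _ := tsum_cauchySchwarz _ _
    _ ≤ ENNReal.ofReal (derivConst α * ∫ z in UHP, ‖f z‖ ^ 2) ^ (1 / 2 : ℝ) *
          ENNReal.ofReal (derivConst β * ∫ z in UHP, ‖g z‖ ^ 2) ^ (1 / 2 : ℝ) := by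
        gcongr
        · exact tsum_deriv_sq_le α hf hfi
        · exact tsum_deriv_sq_le β hg hgi
    _ = _ := by
        rw [hroot, hroot, ← ENNReal.ofReal_mul (by positivity)]
        congr 1
        ring
end
end

section
/- Fix γ ∈ (0,1) and let W : ℕ → [0,∞) be a sequence of weights satisfying ∑_{j=0}^{∞} W(j) · (j!)² · 2^{2j(j+1)} · γ^{−2j} < ∞. Then there exists a constant C such that for all functions f, g : ℂ → ℂ holomorphic on the upper half-plane Π with ∫_Π |f|² dA < ∞ and ∫_Π |g|² dA < ∞, one has ∑_{j=0}^{∞} W(j) · ∫_ℝ |f^{(j)}(x + i·2^{−j})| · |g(x + i·2^{−j})| dx ≤ C · (∫_Π |f|² dA)^{1/2} · (∫_Π |g|² dA)^{1/2}. -/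
/-!
For a function `u` holomorphic on the upper half-plane, `u ^ 2` is holomorphic too, so the mean value
property gives `π r² |u w|² ≤ ∫_{B(w, r)} |u|²` (`enorm_center_le_ball`). Combined with Cauchy's
estimate on the circle of radius `r = y / 2` about `x + iy`, this bounds `|u⁽ʲ⁾(x + iy)|²` by
`(j! (2 / y)ʲ)² · 4 / (π y²)` times the integral of `|u|²` over the disc `B(x + iy, y)`, which is
contained in the half-plane (`enorm_iteratedDeriv_sq_le`). Integrating these local integrals over
`x` costs a factor `2 y` by Tonelli (`lintegral_ball_line_le`). Using this for `f⁽ʲ⁾` and for `g`,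
the Cauchy–Schwarz inequality yields (`line_pairing_le`)

`∫ |f⁽ʲ⁾| |g| dx ≤ (8 / π) · j! (2 / y)ʲ / y · ‖f‖ ‖g‖` on the line `Im z = y`.

For `y = 2 ^ (-j)` the constant is `(8 / π) j! 2 ^ (j (j + 1) + j)`, which is at most
`8 (j!)² 2 ^ (2 j (j + 1)) γ ^ (-2 j)` (`coef_le`), and the hypothesis sums these bounds.
-/

open Complex MeasureTheory Metric Set ENNReal

noncomputable section

/-- The sub-mean value inequality on a circle, with the angle ranging over `(-π, π)` as in
Mathlib's polar coordinates. -/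
theorem enorm_center_le_circle {h : ℂ → ℂ} {c : ℂ} {r ρ : ℝ} (hρ : 0 < ρ) (hr : ρ < r)
    (hh : DifferentiableOn ℂ h (ball c r)) :
    ENNReal.ofReal (2 * Real.pi) * ‖h c‖ₑ ≤
      ∫⁻ θ in Ioo (-Real.pi) Real.pi, ‖h (c + Complex.polarCoord.symm (ρ, θ))‖ₑ := by
  have hd : DiffContOnCl ℂ h (ball c |ρ|) := by
    rw [abs_of_pos hρ]
    exact DifferentiableOn.diffContOnCl_ball hh (closedBall_subset_ball hr)
  have e1 := hd.circleAverage
  rw [Real.circleAverage_eq_integral_add (-Real.pi),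
    intervalIntegral.integral_comp_add_right (fun θ => h (circleMap c ρ θ)),
    show (0 : ℝ) + -Real.pi = -Real.pi by ring, show 2 * Real.pi + -Real.pi = Real.pi by ring,
    intervalIntegral.integral_of_le (by linarith [Real.pi_pos]), inv_smul_eq_iff₀ (by positivity)]
    at e1
  calc ENNReal.ofReal (2 * Real.pi) * ‖h c‖ₑ = ‖(2 * Real.pi) • h c‖ₑ := by
        rw [enorm_smul, Real.enorm_of_nonneg (by positivity)]
    _ = ‖∫ θ in Ioc (-Real.pi) Real.pi, h (circleMap c ρ θ)‖ₑ := by rw [e1]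
    _ ≤ ∫⁻ θ in Ioc (-Real.pi) Real.pi, ‖h (circleMap c ρ θ)‖ₑ := enorm_integral_le_lintegral_enorm _
    _ = _ := by
        rw [← restrict_Ioo_eq_restrict_Ioc]
        refine lintegral_congr fun θ => ?_
        rw [circleMap, Complex.polarCoord_symm_apply, Complex.exp_mul_I]
        simp

theorem measurable_enorm_indicator {f : ℂ → ℂ} {s : Set ℂ} (hs : IsOpen s)
    (hf : ContinuousOn f s) : Measurable (s.indicator fun z => ‖f z‖ₑ) := by
  have : s.indicator (fun z => ‖f z‖ₑ) = fun z => ‖s.indicator f z‖ₑ := by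
    ext z
    by_cases hz : z ∈ s <;> simp [hz]
  rw [this]
  refine Measurable.enorm ?_
  classical
  rw [← Set.piecewise_eq_indicator]
  exact hf.measurable_piecewise continuousOn_const hs.measurableSet

/-- The sub-mean value inequality on a disc, obtained by integrating `enorm_center_le_circle` in
polar coordinates. -/
theorem enorm_center_le_ball {h : ℂ → ℂ} {c : ℂ} {r : ℝ} (hr : 0 < r)
    (hh : DifferentiableOn ℂ h (ball c r)) :
    ENNReal.ofReal (Real.pi * r ^ 2) * ‖h c‖ₑ ≤ ∫⁻ z in ball c r, ‖h z‖ₑ := by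
  have hm : Measurable ((ball c r).indicator fun z => ‖h z‖ₑ) :=
    measurable_enorm_indicator isOpen_ball hh.continuousOn
  rw [← lintegral_indicator measurableSet_ball]
  rw [← lintegral_add_left_eq_self _ c, ← Complex.lintegral_comp_polarCoord_symm]
  rw [polarCoord_target, Measure.volume_eq_prod, ← Measure.prod_restrict, lintegral_prod]
  · calc _ = ∫⁻ ρ in Ioo 0 r, ENNReal.ofReal ρ * (ENNReal.ofReal (2 * Real.pi) * ‖h c‖ₑ) := by
          rw [lintegral_mul_const' _ _ (by finiteness), ← mul_assoc]
          congr 1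
          rw [← ofReal_integral_eq_lintegral_ofReal, ← integral_Ioc_eq_integral_Ioo,
            ← intervalIntegral.integral_of_le hr.le, integral_id,
            ← ENNReal.ofReal_mul (by nlinarith [sq_nonneg r])]
          · congr 1; ring
          · exact (continuous_id.integrableOn_Icc).mono_set Ioo_subset_Icc_self
          · exact (ae_restrict_mem measurableSet_Ioo).mono fun x hx => hx.1.le
      _ ≤ ∫⁻ ρ in Ioo 0 r, ∫⁻ θ in Ioo (-Real.pi) Real.pi, ENNReal.ofReal ρ •
          (ball c r).indicator (fun z => ‖h z‖ₑ) (c + Complex.polarCoord.symm (ρ, θ)) := by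
          refine setLIntegral_mono' measurableSet_Ioo fun ρ hρ => ?_
          simp only [smul_eq_mul]
          rw [lintegral_const_mul' _ _ ofReal_ne_top]
          gcongr
          refine (enorm_center_le_circle hρ.1 hρ.2 hh).trans (lintegral_mono fun θ => ?_)
          rw [indicator_of_mem]
          simp [abs_of_pos hρ.1, hρ.2]
      _ ≤ _ := lintegral_mono_set Ioo_subset_Ioi_self
  · refine (Measurable.aemeasurable ?_)
    refine (measurable_fst.ennreal_ofReal).mul (hm.comp ?_)
    simp only [Complex.polarCoord_symm_apply]
    fun_prop

/-- Cauchy's estimate on the circle of radius `r`, whose boundary values are controlled by applying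
the sub-mean value inequality to `f ^ 2` on discs of radius `r`. -/
theorem enorm_iteratedDeriv_sq_le {f : ℂ → ℂ} {c : ℂ} {r : ℝ} (hr : 0 < r) (j : ℕ)
    (hf : DifferentiableOn ℂ f (ball c (2 * r))) :
    ‖iteratedDeriv j f c‖ₑ ^ 2 ≤ ENNReal.ofReal ((j.factorial / r ^ j) ^ 2 / (Real.pi * r ^ 2)) *
      ∫⁻ z in ball c (2 * r), ‖f z‖ₑ ^ 2 := by
  set N := ∫⁻ z in ball c (2 * r), ‖f z‖ₑ ^ 2 with hN
  by_cases hT : N = ∞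
  · rw [hT, ENNReal.mul_top]
    · exact le_top
    · rw [ne_eq, ENNReal.ofReal_eq_zero, not_le]
      positivity
  have key : ∀ w ∈ sphere c r, ‖f w‖ ≤ Real.sqrt (N.toReal / (Real.pi * r ^ 2)) := by
    intro w hw
    have hsub : ball w r ⊆ ball c (2 * r) := by
      refine ball_subset_ball' ?_
      rw [mem_sphere.1 hw]; linarith
    have h1 := enorm_center_le_ball (h := fun z => f z ^ 2) hr ((hf.mono hsub).pow 2)
    simp only [enorm_pow] at h1
    have h2 : ENNReal.ofReal (Real.pi * r ^ 2) * ‖f w‖ₑ ^ 2 ≤ N :=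
      h1.trans (lintegral_mono_set hsub)
    have h3 := ENNReal.toReal_mono hT h2
    rw [ENNReal.toReal_mul, ENNReal.toReal_ofReal (by positivity), ENNReal.toReal_pow,
      toReal_enorm] at h3
    refine Real.le_sqrt_of_sq_le ?_
    rw [le_div_iff₀' (by positivity)]
    exact h3
  have hd : DiffContOnCl ℂ f (ball c r) :=
    hf.diffContOnCl_ball (closedBall_subset_ball (by linarith))
  have h4 := norm_iteratedDeriv_le_of_forall_mem_sphere_norm_le j hr hd key
  rw [← ENNReal.ofReal_toReal hT, ← ENNReal.ofReal_mul (by positivity), ← ofReal_norm,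
    ← ENNReal.ofReal_pow (norm_nonneg _)]
  refine ENNReal.ofReal_le_ofReal ?_
  calc _ ≤ _ := pow_le_pow_left₀ (norm_nonneg _) h4 2
    _ = (j.factorial / r ^ j) ^ 2 * (Real.sqrt (N.toReal / (Real.pi * r ^ 2))) ^ 2 := by ring
    _ = _ := by rw [Real.sq_sqrt (by positivity)]; ring

/-- Each point `z` lies in the disc of radius `y` about `x + iy` only when `|x - Re z| < y`, so by
Tonelli it is counted with weight at most `2 y`. -/
theorem lintegral_strip_le {G : ℂ → ℝ≥0∞} (hG : Measurable G) {y : ℝ} :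
    ∫⁻ x : ℝ, ∫⁻ z in ball ((x : ℂ) + y * Complex.I) y, G z ≤
      ENNReal.ofReal (2 * y) * ∫⁻ z, G z := by
  have hS : MeasurableSet {p : ℝ × ℂ | p.2 ∈ ball ((p.1 : ℂ) + y * Complex.I) y} := by
    simp only [mem_ball]
    exact (isOpen_lt (by fun_prop) (by fun_prop)).measurableSet
  have hm : Measurable fun p : ℝ × ℂ => (ball ((p.1 : ℂ) + y * Complex.I) y).indicator G p.2 :=
    (hG.comp measurable_snd).indicator hS
  simp only [← lintegral_indicator measurableSet_ball]
  rw [lintegral_lintegral_swap hm.aemeasurable, ← lintegral_const_mul _ hG]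
  refine lintegral_mono fun z => ?_
  calc ∫⁻ x : ℝ, (ball ((x : ℂ) + y * Complex.I) y).indicator G z
      ≤ ∫⁻ x : ℝ, (ball z.re y).indicator (fun _ => G z) x := by
        refine lintegral_mono fun x => ?_
        by_cases hz : z ∈ ball ((x : ℂ) + y * Complex.I) y
        · have hx : x ∈ ball z.re y := by
            rw [mem_ball, dist_comm, Real.dist_eq]
            rw [mem_ball, Complex.dist_eq] at hz
            refine lt_of_le_of_lt ?_ hz
            simpa using Complex.abs_re_le_norm (z - (x + y * Complex.I))
          rw [indicator_of_mem hz, indicator_of_mem hx]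
        · rw [indicator_of_notMem hz]; exact zero_le
    _ = ENNReal.ofReal (2 * y) * G z := by
        rw [lintegral_indicator measurableSet_ball, setLIntegral_const, Real.volume_ball, mul_comm]

theorem ball_subset_UHP (x y : ℝ) : ball ((x : ℂ) + y * Complex.I) y ⊆ UHP := by
  intro z hz
  rw [mem_ball, Complex.dist_eq] at hz
  have h := (Complex.abs_im_le_norm (z - (x + y * Complex.I))).trans_lt hz
  simp at h
  have := (abs_lt.1 h).1
  show 0 < z.im
  linarith

theorem isOpen_UHP : IsOpen UHP := isOpen_lt continuous_const Complex.continuous_im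

theorem lintegral_ball_line_le {f : ℂ → ℂ} (hf : DifferentiableOn ℂ f UHP) (y : ℝ) :
    ∫⁻ x : ℝ, ∫⁻ z in ball ((x : ℂ) + y * Complex.I) y, ‖f z‖ₑ ^ 2 ≤
      ENNReal.ofReal (2 * y) * ∫⁻ z in UHP, ‖f z‖ₑ ^ 2 := by
  have hG : Measurable (UHP.indicator fun z => ‖f z‖ₑ ^ 2) := by
    simpa using measurable_enorm_indicator isOpen_UHP (hf.pow 2).continuousOn
  rw [← lintegral_indicator isOpen_UHP.measurableSet]
  refine le_of_eq_of_le (lintegral_congr fun x => ?_) (lintegral_strip_le hG)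
  refine setLIntegral_congr_fun measurableSet_ball fun z hz => ?_
  exact (indicator_of_mem (ball_subset_UHP x y hz) (fun z => ‖f z‖ₑ ^ 2)).symm

/-- The function `f` is arbitrary off `UHP`, so the integrand is first replaced by its
indicator on `UHP`, which changes nothing because every disc involved lies in `UHP`. -/
theorem measurable_ball_line {f : ℂ → ℂ} (hf : DifferentiableOn ℂ f UHP) (y : ℝ) :
    Measurable fun x : ℝ => ∫⁻ z in ball ((x : ℂ) + y * Complex.I) y, ‖f z‖ₑ ^ 2 := by
  have hG : Measurable (UHP.indicator fun z => ‖f z‖ₑ ^ 2) := by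
    simpa using measurable_enorm_indicator isOpen_UHP (hf.pow 2).continuousOn
  have hS : MeasurableSet {p : ℝ × ℂ | p.2 ∈ ball ((p.1 : ℂ) + y * Complex.I) y} := by
    simp only [mem_ball]
    exact (isOpen_lt (by fun_prop) (by fun_prop)).measurableSet
  have hm := ((hG.comp measurable_snd).indicator hS).lintegral_prod_right' (ν := volume)
  refine (congrArg Measurable (funext fun x => ?_)).mp hm
  rw [← lintegral_indicator measurableSet_ball]
  refine lintegral_congr fun z => ?_
  by_cases hz : z ∈ ball ((x : ℂ) + y * Complex.I) y
  · have h1 : (x, z) ∈ {p : ℝ × ℂ | p.2 ∈ ball ((p.1 : ℂ) + y * Complex.I) y} := hz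
    rw [indicator_of_mem h1, indicator_of_mem hz]
    exact indicator_of_mem (ball_subset_UHP x y hz) (fun z => ‖f z‖ₑ ^ 2)
  · have h1 : (x, z) ∉ {p : ℝ × ℂ | p.2 ∈ ball ((p.1 : ℂ) + y * Complex.I) y} := hz
    rw [indicator_of_notMem h1, indicator_of_notMem hz]

/-- The bound for a single line `Im z = y`: pointwise estimates by local `L²` norms over discs
tangent to the real axis, then the Cauchy–Schwarz inequality in `x`. -/
theorem line_pairing_le {f g : ℂ → ℂ} (hf : DifferentiableOn ℂ f UHP)
    (hg : DifferentiableOn ℂ g UHP) {y : ℝ} (hy : 0 < y) (j : ℕ) :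
    ∫⁻ x : ℝ, ‖iteratedDeriv j f ((x : ℂ) + y * Complex.I)‖ₑ * ‖g ((x : ℂ) + y * Complex.I)‖ₑ ≤
      ENNReal.ofReal (8 / Real.pi * (j.factorial * (2 / y) ^ j / y)) *
        ((∫⁻ z in UHP, ‖f z‖ₑ ^ 2) ^ (1 / 2 : ℝ) * (∫⁻ z in UHP, ‖g z‖ₑ ^ 2) ^ (1 / 2 : ℝ)) := by
  set F : ℝ → ℝ≥0∞ := fun x => ∫⁻ z in ball ((x : ℂ) + y * Complex.I) y, ‖f z‖ₑ ^ 2 with hF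
  set G : ℝ → ℝ≥0∞ := fun x => ∫⁻ z in ball ((x : ℂ) + y * Complex.I) y, ‖g z‖ₑ ^ 2 with hG
  have root : ∀ {a b : ℝ≥0∞} {k : ℝ}, 0 ≤ k → a ^ 2 ≤ ENNReal.ofReal (k ^ 2) * b →
      a ≤ ENNReal.ofReal k * b ^ (1 / 2 : ℝ) := by
    intro a b k hk h
    have h' := ENNReal.rpow_le_rpow h (show (0 : ℝ) ≤ 1 / 2 by norm_num)
    rw [ENNReal.mul_rpow_of_nonneg _ _ (by norm_num), ENNReal.ofReal_pow hk] at h'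
    simpa only [← ENNReal.rpow_natCast, ← ENNReal.rpow_mul, Nat.cast_ofNat,
      show (2 : ℝ) * (1 / 2) = 1 by norm_num, ENNReal.rpow_one] using h'
  have hpi := Real.pi_pos
  -- Pointwise bounds, from discs of radius `y / 2` centred on the circle of radius `y / 2`.
  have pw : ∀ {u : ℂ → ℂ} (_ : DifferentiableOn ℂ u UHP) (n : ℕ) (x : ℝ),
      ‖iteratedDeriv n u ((x : ℂ) + y * Complex.I)‖ₑ ≤
        ENNReal.ofReal (n.factorial * (2 / y) ^ n * (2 / (Real.sqrt Real.pi * y))) *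
          (∫⁻ z in ball ((x : ℂ) + y * Complex.I) y, ‖u z‖ₑ ^ 2) ^ (1 / 2 : ℝ) := by
    intro u hu n x
    refine root (by positivity) ?_
    have h := enorm_iteratedDeriv_sq_le (f := u) (c := (x : ℂ) + y * Complex.I) (half_pos hy) n
    rw [mul_div_cancel₀ y two_ne_zero] at h
    refine (h (hu.mono (ball_subset_UHP x y))).trans_eq ?_
    congr 2
    rw [mul_pow _ (2 / _) 2, div_pow 2 _ 2, mul_pow (√_), Real.sq_sqrt hpi.le]
    simp only [div_pow]
    field_simp
    try ring
  have hFm : Measurable F := measurable_ball_line hf y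
  have hGm : Measurable G := measurable_ball_line hg y
  have CS : ∫⁻ x, F x ^ (1 / 2 : ℝ) * G x ^ (1 / 2 : ℝ) ≤
      (∫⁻ x, F x) ^ (1 / 2 : ℝ) * (∫⁻ x, G x) ^ (1 / 2 : ℝ) := by
    have := ENNReal.lintegral_mul_le_Lp_mul_Lq volume Real.HolderConjugate.two_two
      (hFm.pow_const (1 / 2 : ℝ)).aemeasurable (hGm.pow_const (1 / 2 : ℝ)).aemeasurable
    simpa only [← ENNReal.rpow_mul, Pi.mul_apply, show (1 / 2 : ℝ) * 2 = 1 by norm_num,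
      ENNReal.rpow_one] using this
  set a := j.factorial * (2 / y) ^ j * (2 / (Real.sqrt Real.pi * y)) with ha
  set b := (2 / (Real.sqrt Real.pi * y)) with hb
  have ha0 : 0 ≤ a := by positivity
  have hb0 : 0 ≤ b := by positivity
  have hFl := ENNReal.rpow_le_rpow (lintegral_ball_line_le hf y) (show (0 : ℝ) ≤ 1 / 2 by norm_num)
  have hGl := ENNReal.rpow_le_rpow (lintegral_ball_line_le hg y) (show (0 : ℝ) ≤ 1 / 2 by norm_num)
  rw [ENNReal.mul_rpow_of_nonneg _ _ (by norm_num)] at hFl hGl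
  have hsq : ENNReal.ofReal (2 * y) ^ (1 / 2 : ℝ) * ENNReal.ofReal (2 * y) ^ (1 / 2 : ℝ) =
      ENNReal.ofReal (2 * y) := by
    rw [← ENNReal.rpow_add_of_nonneg _ _ (by norm_num) (by norm_num)]; norm_num
  have hcoef : ENNReal.ofReal a * ENNReal.ofReal b * ENNReal.ofReal (2 * y) =
      ENNReal.ofReal (8 / Real.pi * (j.factorial * (2 / y) ^ j / y)) := by
    rw [← ENNReal.ofReal_mul ha0, ← ENNReal.ofReal_mul (by positivity)]
    congr 1
    rw [ha, mul_assoc (_ * _) b b, ← sq, hb, div_pow _ (√_ * y), mul_pow (√_),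
      Real.sq_sqrt hpi.le]
    field_simp
    try ring
  calc _ ≤ ∫⁻ x : ℝ, (ENNReal.ofReal a * ENNReal.ofReal b) *
        (F x ^ (1 / 2 : ℝ) * G x ^ (1 / 2 : ℝ)) := by
        refine lintegral_mono fun x => ?_
        have h1 := pw hf j x
        have h2 := pw hg 0 x
        simp only [iteratedDeriv_zero, Nat.factorial_zero, Nat.cast_one, pow_zero, one_mul] at h2
        exact (mul_le_mul' h1 h2).trans_eq (mul_mul_mul_comm _ _ _ _)
    _ = (ENNReal.ofReal a * ENNReal.ofReal b) * ∫⁻ x : ℝ, F x ^ (1 / 2 : ℝ) * G x ^ (1 / 2 : ℝ) :=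
        lintegral_const_mul' _ _ (by finiteness)
    _ ≤ (ENNReal.ofReal a * ENNReal.ofReal b) *
        ((ENNReal.ofReal (2 * y) ^ (1 / 2 : ℝ) * (∫⁻ z in UHP, ‖f z‖ₑ ^ 2) ^ (1 / 2 : ℝ)) *
        (ENNReal.ofReal (2 * y) ^ (1 / 2 : ℝ) * (∫⁻ z in UHP, ‖g z‖ₑ ^ 2) ^ (1 / 2 : ℝ))) := by
        gcongr
        exact CS.trans (mul_le_mul' hFl hGl)
    _ = _ := by
        rw [mul_mul_mul_comm (_ ^ _), hsq, ← mul_assoc, hcoef]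

theorem lintegral_sq_rpow_half {f : ℂ → ℂ} (hf : IntegrableOn (fun z => ‖f z‖ ^ 2) UHP volume) :
    (∫⁻ z in UHP, ‖f z‖ₑ ^ 2) ^ (1 / 2 : ℝ) =
      ENNReal.ofReal (Real.sqrt (∫ z in UHP, ‖f z‖ ^ 2)) := by
  rw [Real.sqrt_eq_rpow, ← ENNReal.ofReal_rpow_of_nonneg (integral_nonneg fun _ => by positivity)
    (by norm_num), ofReal_integral_eq_lintegral_ofReal hf (ae_of_all _ fun _ => by positivity)]
  simp [ENNReal.ofReal_pow, ofReal_norm]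

/-- At height `y = 2 ^ (-j)` the constant of `line_pairing_le` is dominated by the summable weight. -/
theorem coef_le {γ : ℝ} (hγ : γ ∈ Set.Ioo (0 : ℝ) 1) (j : ℕ) :
    8 / Real.pi * (j.factorial * (2 / (2 : ℝ) ^ (-(j : ℤ))) ^ j / (2 : ℝ) ^ (-(j : ℤ))) ≤
      8 * ((j.factorial : ℝ) ^ 2 * (2 : ℝ) ^ (2 * j * (j + 1)) * γ ^ (-(2 * (j : ℤ)))) := by
  have hg : 1 ≤ γ ^ (-(2 * (j : ℤ))) := by
    rw [zpow_neg]
    exact one_le_inv_iff₀.2 ⟨zpow_pos hγ.1 _, by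
      exact_mod_cast pow_le_one₀ (n := 2 * j) hγ.1.le hγ.2.le⟩
  have h1 : (1 : ℝ) ≤ j.factorial := by exact_mod_cast j.factorial_pos
  have e : (j.factorial * (2 / (2 : ℝ) ^ (-(j : ℤ))) ^ j / (2 : ℝ) ^ (-(j : ℤ))) =
      j.factorial * 2 ^ (j * (j + 1) + j) := by
    rw [zpow_neg, zpow_natCast, div_inv_eq_mul, div_inv_eq_mul, ← pow_succ', ← pow_mul, mul_assoc,
      ← pow_add]
    congr 2; ring
  rw [e]
  have h2 : (2 : ℝ) ^ (j * (j + 1) + j) ≤ 2 ^ (2 * j * (j + 1)) :=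
    pow_le_pow_right₀ (by norm_num) (by nlinarith)
  have h3 : 8 / Real.pi ≤ 8 := div_le_self (by norm_num) (by linarith [Real.pi_gt_three])
  calc 8 / Real.pi * (j.factorial * 2 ^ (j * (j + 1) + j))
      ≤ 8 * ((j.factorial : ℝ) ^ 2 * 2 ^ (2 * j * (j + 1))) := by
        gcongr
        nlinarith
    _ ≤ _ := by
        refine mul_le_mul_of_nonneg_left ?_ (by norm_num)
        exact le_mul_of_one_le_right (by positivity) hg

/-- Boundedness of the sesquilinear form `∑_j (-1)^j W(j) ∫_{L_j} ∂^j f ⬝ conj g dx` associated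
with the hyperfunction-type symbol `∑_j W(j) ∂^j δ(L_j)`, under summability of the bounds
`W(j) (j!)² 2^{2j(j+1)} γ^{-2j}`. -/
theorem hyperfunction_symbol_form_bounded
    (γ : ℝ) (hγ : γ ∈ Set.Ioo (0 : ℝ) 1) (W : ℕ → ℝ) (hW : ∀ j, 0 ≤ W j)
    (hsum : Summable fun j : ℕ =>
      W j * (j.factorial : ℝ) ^ 2 * (2 : ℝ) ^ (2 * j * (j + 1)) * γ ^ (-(2 * (j : ℤ)))) :
    ∃ C : ℝ, ∀ f g : ℂ → ℂ,
      DifferentiableOn ℂ f UHP → DifferentiableOn ℂ g UHP →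
      IntegrableOn (fun z => ‖f z‖ ^ 2) UHP volume →
      IntegrableOn (fun z => ‖g z‖ ^ 2) UHP volume →
      ∑' j : ℕ,
          ENNReal.ofReal (W j)
            * ∫⁻ x : ℝ,
                (‖iteratedDeriv j f ((x : ℂ) + (((2 : ℝ) ^ (-(j : ℤ)) : ℝ) : ℂ) * Complex.I)‖₊ : ℝ≥0∞)
                  * (‖g ((x : ℂ) + (((2 : ℝ) ^ (-(j : ℤ)) : ℝ) : ℂ) * Complex.I)‖₊ : ℝ≥0∞)
        ≤ ENNReal.ofReal
            (C * Real.sqrt (∫ z in UHP, ‖f z‖ ^ 2) * Real.sqrt (∫ z in UHP, ‖g z‖ ^ 2)) := by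
  set T : ℕ → ℝ := fun j =>
    W j * (j.factorial : ℝ) ^ 2 * (2 : ℝ) ^ (2 * j * (j + 1)) * γ ^ (-(2 * (j : ℤ))) with hT
  have hT0 : ∀ j, 0 ≤ T j := fun j => by
    have := hW j
    have := zpow_pos hγ.1 (-(2 * (j : ℤ)))
    positivity
  refine ⟨8 * ∑' j, T j, fun f g hf hg hfi hgi => ?_⟩
  set A := Real.sqrt (∫ z in UHP, ‖f z‖ ^ 2)
  set B := Real.sqrt (∫ z in UHP, ‖g z‖ ^ 2)
  have hA : 0 ≤ A := Real.sqrt_nonneg _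
  have hB : 0 ≤ B := Real.sqrt_nonneg _
  calc _ ≤ ∑' j, ENNReal.ofReal (8 * A * B * T j) := by
        refine ENNReal.tsum_le_tsum fun j => ?_
        have h := line_pairing_le hf hg (y := (2 : ℝ) ^ (-(j : ℤ))) (by positivity) j
        rw [lintegral_sq_rpow_half hfi, lintegral_sq_rpow_half hgi, ← ENNReal.ofReal_mul hA,
          ← ENNReal.ofReal_mul (by have := Real.pi_pos; positivity)] at h
        refine (mul_le_mul_right h (ENNReal.ofReal (W j))).trans ?_
        rw [← ENNReal.ofReal_mul (hW j)]
        refine ENNReal.ofReal_le_ofReal ?_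
        calc _ ≤ _ := mul_le_mul_of_nonneg_left
              (mul_le_mul_of_nonneg_right (coef_le hγ j) (mul_nonneg hA hB)) (hW j)
          _ = 8 * A * B * T j := by rw [hT]; ring
    _ = ENNReal.ofReal (∑' j, 8 * A * B * T j) :=
        (ENNReal.ofReal_tsum_of_nonneg (fun j => by have := hT0 j; positivity)
          (hsum.mul_left _)).symm
    _ = _ := by
        rw [tsum_mul_left]
        congr 1
        ring
end
end
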